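/- The t = q^{−k}, k → ∞ degeneration of the first Macdonald operator yields the first q-deformed Toda Hamiltonian: let q ∈ ℝ with 0 < q < 1 and let x_1, …, x_{ℓ+1} be nonzero real (or complex) numbers. Fix i ∈ {1, …, ℓ+1}. Then, as k → ∞ over the natural numbers, the quantity q^{k(ℓ+1−i)} · ∏_{j ≠ i} ( q^{−k} x_i − q^{k(j−i)} x_j ) / ( x_i − q^{k(j−i)} x_j ) is defined for all sufficiently large k and converges: to 1 − x_{i−1}^{−1} x_i if i ≥ 2, and to 1 if i = 1. -/

import Mathlib

open Finset Filter

/-!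
Put `s = q ^ k = t⁻¹`. The factor indexed by `j` is a rational function of `s`, and only its
behaviour as `s → 0` matters. For `j > i` it has a simple pole at `0`; there are `ℓ + 1 - i` such
factors (1-based `i`), so the prefactor supplies exactly one power of `s` to each, and `s` times the
factor tends to `1`. For `j < i`, cancelling `-s ^ (j - i)` turns the factor into
`(x_j - s ^ (i - j - 1) x_i) / (x_j - s ^ (i - j) x_i)`, which tends to `1` unless the exponent
`i - j - 1` vanishes: the neighbour `j = i - 1` alone contributes the Toda coefficient.
-/

section Coefficients

variable {𝕜 : Type*} [Field 𝕜] {ℓ : ℕ}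

/-- The factor `(t u - s ^ m v) / (u - s ^ m v)`, `t = s⁻¹`, of the coefficients of the first
Macdonald operator; the factor indexed by `j` in the coefficient of `T_{x_i}` has `m = j - i`,
`u = x_i` and `v = x_j`. -/
def macdonaldFactor (m : ℤ) (u v s : 𝕜) : 𝕜 :=
  (s⁻¹ * u - s ^ m * v) / (u - s ^ m * v)

/-- The coefficient of `T_{x_i}` in the conjugated first Macdonald operator, as a function of
`s = t⁻¹`. The index `i` is `0`-based, so that the power of `s` in front is the paper's
`ℓ + 1 - i`. -/
def macdonaldCoeff (x : Fin (ℓ + 1) → 𝕜) (i : Fin (ℓ + 1)) (s : 𝕜) : 𝕜 :=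
  s ^ ((ℓ : ℤ) - ((i : ℕ) : ℤ)) *
    ∏ j ∈ univ.erase i, macdonaldFactor (((j : ℕ) : ℤ) - ((i : ℕ) : ℤ)) (x i) (x j) s

/-- The coefficient `X_i ^ (1 - δ_{i,1})`, `X_i = 1 - x_{i-1}⁻¹ x_i`, of `T_{x_i}` in the first
`q`-deformed Toda Hamiltonian, with a `0`-based index `i`. -/
def todaCoeff {n : ℕ} (x : Fin n → 𝕜) (i : Fin n) : 𝕜 :=
  if _ : 0 < (i : ℕ) then 1 - (x ⟨(i : ℕ) - 1, by omega⟩)⁻¹ * x i else 1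

lemma sub_zpow_mul_eq_neg_zpow_mul {s : 𝕜} (hs : s ≠ 0) (m : ℤ) (u v : 𝕜) :
    u - s ^ m * v = -s ^ m * (v - s ^ (-m) * u) := by
  rw [zpow_neg]
  field_simp
  ring

lemma macdonaldFactor_eq_div {s : 𝕜} (hs : s ≠ 0) (m : ℤ) (u v : 𝕜) :
    macdonaldFactor m u v s = (v - s ^ (-m - 1) * u) / (v - s ^ (-m) * u) := by
  rw [macdonaldFactor, sub_zpow_mul_eq_neg_zpow_mul hs m u,
    sub_zpow_mul_eq_neg_zpow_mul hs m (s⁻¹ * u),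
    mul_div_mul_left _ _ (neg_ne_zero.mpr (zpow_ne_zero m hs)), zpow_sub_one₀ hs, mul_assoc]

lemma mul_macdonaldFactor {s : 𝕜} (hs : s ≠ 0) (m : ℤ) (u v : 𝕜) :
    s * macdonaldFactor m u v s = (u - s ^ (m + 1) * v) / (u - s ^ m * v) := by
  rw [macdonaldFactor, ← mul_div_assoc, mul_sub, mul_inv_cancel_left₀ hs, zpow_add_one₀ hs]
  ring

lemma macdonaldCoeff_eq_prod_Iio_mul_prod_Ioi (x : Fin (ℓ + 1) → 𝕜) (i : Fin (ℓ + 1)) (s : 𝕜) :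
    macdonaldCoeff x i s =
      (∏ j ∈ Iio i, macdonaldFactor (((j : ℕ) : ℤ) - ((i : ℕ) : ℤ)) (x i) (x j) s) *
        ∏ j ∈ Ioi i, s * macdonaldFactor (((j : ℕ) : ℤ) - ((i : ℕ) : ℤ)) (x i) (x j) s := by
  have pow_eq : s ^ ((ℓ : ℤ) - ((i : ℕ) : ℤ)) = ∏ _j ∈ Ioi i, s := by
    rw [prod_const, Fin.card_Ioi, ← zpow_natCast]
    congr 1
    omega
  have erase_eq : univ.erase i = (Ioi i).disjUnion (Iio i) (disjoint_Ioi_Iio i) := by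
    rw [Ioi_disjUnion_Iio, compl_singleton]
  rw [macdonaldCoeff, pow_eq, erase_eq, prod_disjUnion, prod_mul_distrib]
  ring

end Coefficients

lemma prod_Iio_ite_succ_eq {M : Type*} [CommMonoid M] {n : ℕ} (f : Fin n → M) (i : Fin n) :
    ∏ j ∈ Iio i, (if (j : ℕ) + 1 = i then f j else 1) =
      if _ : 0 < (i : ℕ) then f ⟨(i : ℕ) - 1, by omega⟩ else 1 := by
  split_ifs with hi
  · have pred_iff (j : Fin n) : (j : ℕ) + 1 = i ↔ ⟨(i : ℕ) - 1, by omega⟩ = j := by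
      simp only [Fin.ext_iff]
      omega
    simp only [pred_iff, prod_ite_eq, mem_Iio, Fin.lt_def]
    exact if_pos (by omega)
  · exact prod_eq_one fun j _ ↦ if_neg (by omega)

section Limits

open scoped Topology

variable {𝕜 : Type*} [Field 𝕜] [TopologicalSpace 𝕜] [IsTopologicalDivisionRing 𝕜]
  {m : ℤ} {u v : 𝕜}

lemma tendsto_sub_zpow_mul_nhdsNE_zero (hm : 0 < m) (u v : 𝕜) :
    Tendsto (fun s ↦ u - s ^ m * v) (𝓝[≠] 0) (𝓝 u) := by
  have zpow_tendsto : Tendsto (fun s : 𝕜 ↦ s ^ m) (𝓝 0) (𝓝 0) := by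
    simpa only [zero_zpow m hm.ne'] using
      (continuousAt_zpow₀ (0 : 𝕜) m (Or.inr hm.le)).tendsto
  simpa only [zero_mul, sub_zero] using
    ((zpow_tendsto.mono_left nhdsWithin_le_nhds).mul_const v).const_sub u

lemma eventually_sub_zpow_mul_ne_zero_of_pos [T1Space 𝕜] (hm : 0 < m) (hu : u ≠ 0) (v : 𝕜) :
    ∀ᶠ s in 𝓝[≠] 0, u - s ^ m * v ≠ 0 :=
  (tendsto_sub_zpow_mul_nhdsNE_zero hm u v).eventually_ne hu

lemma eventually_sub_zpow_mul_ne_zero_of_neg [T1Space 𝕜] (hm : m < 0) (u : 𝕜) (hv : v ≠ 0) :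
    ∀ᶠ s in 𝓝[≠] 0, u - s ^ m * v ≠ 0 := by
  filter_upwards [eventually_sub_zpow_mul_ne_zero_of_pos (neg_pos.mpr hm) hv u,
    self_mem_nhdsWithin] with s hne hs
  rw [sub_zpow_mul_eq_neg_zpow_mul hs]
  exact mul_ne_zero (neg_ne_zero.mpr (zpow_ne_zero m hs)) hne

lemma tendsto_mul_macdonaldFactor_of_pos (hm : 0 < m) (hu : u ≠ 0) (v : 𝕜) :
    Tendsto (fun s ↦ s * macdonaldFactor m u v s) (𝓝[≠] 0) (𝓝 1) := by
  have quotient_tendsto := (tendsto_sub_zpow_mul_nhdsNE_zero (by omega : 0 < m + 1) u v).div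
    (tendsto_sub_zpow_mul_nhdsNE_zero hm u v) hu
  rw [div_self hu] at quotient_tendsto
  refine quotient_tendsto.congr' ?_
  filter_upwards [self_mem_nhdsWithin] with s hs
  exact (mul_macdonaldFactor hs m u v).symm

lemma tendsto_macdonaldFactor_of_lt_neg_one (hm : m < -1) (u : 𝕜) (hv : v ≠ 0) :
    Tendsto (macdonaldFactor m u v) (𝓝[≠] 0) (𝓝 1) := by
  have quotient_tendsto := (tendsto_sub_zpow_mul_nhdsNE_zero (by omega : 0 < -m - 1) v u).div
    (tendsto_sub_zpow_mul_nhdsNE_zero (by omega : 0 < -m) v u) hv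
  rw [div_self hv] at quotient_tendsto
  refine quotient_tendsto.congr' ?_
  filter_upwards [self_mem_nhdsWithin] with s hs
  exact (macdonaldFactor_eq_div hs m u v).symm

lemma tendsto_macdonaldFactor_neg_one (u : 𝕜) (hv : v ≠ 0) :
    Tendsto (macdonaldFactor (-1) u v) (𝓝[≠] 0) (𝓝 (1 - v⁻¹ * u)) := by
  have quotient_tendsto := (tendsto_const_nhds (x := v - u)).div
    (tendsto_sub_zpow_mul_nhdsNE_zero zero_lt_one v u) hv
  have limit_eq : (v - u) / v = 1 - v⁻¹ * u := by
    rw [sub_div, div_self hv, div_eq_inv_mul]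
  rw [← limit_eq]
  refine quotient_tendsto.congr' ?_
  filter_upwards [self_mem_nhdsWithin] with s hs
  simp [macdonaldFactor_eq_div hs]

lemma tendsto_prod_Iio_macdonaldFactor {n : ℕ} {i : Fin n} {x : Fin n → 𝕜}
    (hx : ∀ j < i, x j ≠ 0) :
    Tendsto
      (fun s ↦ ∏ j ∈ Iio i, macdonaldFactor (((j : ℕ) : ℤ) - ((i : ℕ) : ℤ)) (x i) (x j) s)
      (𝓝[≠] 0) (𝓝 (todaCoeff x i)) := by
  rw [todaCoeff, ← prod_Iio_ite_succ_eq fun j ↦ 1 - (x j)⁻¹ * x i]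
  refine tendsto_finsetProd _ fun j hj ↦ ?_
  have hji : j < i := mem_Iio.mp hj
  split_ifs with hadj
  · rw [show ((j : ℕ) : ℤ) - ((i : ℕ) : ℤ) = -1 by omega]
    exact tendsto_macdonaldFactor_neg_one (x i) (hx j hji)
  · exact tendsto_macdonaldFactor_of_lt_neg_one (by omega) (x i) (hx j hji)

lemma tendsto_prod_Ioi_mul_macdonaldFactor {n : ℕ} {i : Fin n} {x : Fin n → 𝕜} (hx : x i ≠ 0) :
    Tendsto
      (fun s ↦ ∏ j ∈ Ioi i, s * macdonaldFactor (((j : ℕ) : ℤ) - ((i : ℕ) : ℤ)) (x i) (x j) s)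
      (𝓝[≠] 0) (𝓝 1) := by
  rw [← prod_const_one (s := Ioi i)]
  refine tendsto_finsetProd _ fun j hj ↦ ?_
  have hij : i < j := mem_Ioi.mp hj
  exact tendsto_mul_macdonaldFactor_of_pos (by omega) hx (x j)

theorem tendsto_macdonaldCoeff_nhdsNE_zero {ℓ : ℕ} {i : Fin (ℓ + 1)} {x : Fin (ℓ + 1) → 𝕜}
    (hx : ∀ j ≤ i, x j ≠ 0) :
    Tendsto (macdonaldCoeff x i) (𝓝[≠] 0) (𝓝 (todaCoeff x i)) := by
  have prod_tendsto := (tendsto_prod_Iio_macdonaldFactor fun j hj ↦ hx j hj.le).mul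
    (tendsto_prod_Ioi_mul_macdonaldFactor (hx i le_rfl))
  simpa only [← macdonaldCoeff_eq_prod_Iio_mul_prod_Ioi, mul_one] using prod_tendsto

theorem eventually_macdonaldFactor_denom_ne_zero [T1Space 𝕜] {n : ℕ} {i : Fin n} {x : Fin n → 𝕜}
    (hx : ∀ j ≤ i, x j ≠ 0) :
    ∀ᶠ s in 𝓝[≠] (0 : 𝕜), ∀ j ∈ univ.erase i,
      x i - s ^ (((j : ℕ) : ℤ) - ((i : ℕ) : ℤ)) * x j ≠ 0 := by
  refine (eventually_all_finset _).mpr fun j hj ↦ ?_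
  rcases lt_or_gt_of_ne (ne_of_mem_erase hj) with hji | hij
  · exact eventually_sub_zpow_mul_ne_zero_of_neg (by omega) (x i) (hx j hji.le)
  · exact eventually_sub_zpow_mul_ne_zero_of_pos (by omega) (hx i le_rfl) (x j)

theorem macdonald_to_toda_coefficient_limit_general [T1Space 𝕜] (ℓ : ℕ) {q : 𝕜} (hq0 : q ≠ 0)
    (hq : IsTopologicallyNilpotent q) (x : Fin (ℓ + 1) → 𝕜) (i : Fin (ℓ + 1))
    (hx : ∀ j ≤ i, x j ≠ 0) :
    (∀ᶠ k : ℕ in atTop, ∀ j ∈ Finset.univ.erase i,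
        x i - q ^ ((k : ℤ) * (((j : ℕ) : ℤ) - ((i : ℕ) : ℤ))) * x j ≠ 0) ∧
    Tendsto (fun k : ℕ =>
        q ^ ((k : ℤ) * ((ℓ : ℤ) - ((i : ℕ) : ℤ))) *
          ∏ j ∈ Finset.univ.erase i,
            (q ^ (-(k : ℤ)) * x i - q ^ ((k : ℤ) * (((j : ℕ) : ℤ) - ((i : ℕ) : ℤ))) * x j) /
              (x i - q ^ ((k : ℤ) * (((j : ℕ) : ℤ) - ((i : ℕ) : ℤ))) * x j))
      atTop
      (𝓝 (if h : 0 < (i : ℕ) then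
          1 - (x ⟨(i : ℕ) - 1, lt_of_le_of_lt (Nat.sub_le _ _) i.isLt⟩)⁻¹ * x i
        else 1)) := by
  have pow_tendsto : Tendsto (fun k : ℕ ↦ q ^ k) atTop (𝓝[≠] 0) :=
    tendsto_nhdsWithin_iff.mpr ⟨hq, .of_forall fun k ↦ pow_ne_zero k hq0⟩
  simp only [zpow_mul, zpow_neg, zpow_natCast]
  exact ⟨pow_tendsto.eventually (eventually_macdonaldFactor_denom_ne_zero hx),
    (tendsto_macdonaldCoeff_nhdsNE_zero hx).comp pow_tendsto⟩

end Limits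

/-- the `t = q^{-k}`, `k → ∞` degeneration of the coefficient of the shift
operator `T_{x_i}` in the conjugated first Macdonald operator: for `0 < q < 1` and
nonzero `x_1, …, x_{ℓ+1}`, the quantity
`q^{k(ℓ+1-i)} ∏_{j≠i} (q^{-k} x_i - q^{k(j-i)} x_j)/(x_i - q^{k(j-i)} x_j)`
is defined (nonvanishing denominators) for all sufficiently large `k` and converges, as
`k → ∞`, to `1 - x_{i-1}⁻¹ x_i` if `i ≥ 2` and to `1` if `i = 1` (`1`-based indices;
here `i : Fin (ℓ+1)` is `0`-based, the paper's `i` being `(i : ℕ) + 1`). -/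
theorem macdonald_to_toda_coefficient_limit (ℓ : ℕ) (q : ℝ) (hq0 : 0 < q) (hq1 : q < 1)
    (x : Fin (ℓ + 1) → ℝ) (hx : ∀ j, x j ≠ 0) (i : Fin (ℓ + 1)) :
    (∀ᶠ k : ℕ in atTop, ∀ j ∈ Finset.univ.erase i,
        x i - q ^ ((k : ℤ) * (((j : ℕ) : ℤ) - ((i : ℕ) : ℤ))) * x j ≠ 0) ∧
    Tendsto (fun k : ℕ =>
        q ^ ((k : ℤ) * ((ℓ : ℤ) - ((i : ℕ) : ℤ))) *
          ∏ j ∈ Finset.univ.erase i,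
            (q ^ (-(k : ℤ)) * x i - q ^ ((k : ℤ) * (((j : ℕ) : ℤ) - ((i : ℕ) : ℤ))) * x j) /
              (x i - q ^ ((k : ℤ) * (((j : ℕ) : ℤ) - ((i : ℕ) : ℤ))) * x j))
      atTop
      (nhds (if h : 0 < (i : ℕ) then
          1 - (x ⟨(i : ℕ) - 1, lt_of_le_of_lt (Nat.sub_le _ _) i.isLt⟩)⁻¹ * x i
        else 1)) := by
  exact macdonald_to_toda_coefficient_limit_general ℓ hq0.ne'
    (tendsto_pow_atTop_nhds_zero_of_lt_one hq0.le hq1) x i fun j _ ↦ hx j
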